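/- Let β ≥ 1, 0 < α < 1/3, and let (θ_*, 0) and (θ_**, 0) with 0 < θ_* < θ_β < θ_** < π/2 be the two equilibrium points of the system dθ/dt = F₁(θ,W), dW/dt = F₂(θ,W). For initial data of the form (θ₀, 0) ∈ Ω_β: if θ₀ ∈ (θ_*, θ_**) and H(θ₀, 0) < min{H(θ_*, 0), H(θ_**, 0)}, then the solution starting from (θ₀, 0) is a leapfrogging solution (a closed orbit revolving around (θ_β, 0)), and its orbit equals the set {(θ,W) ∈ Ω_β : H(θ,W) = H(θ₀,0)} ∩ ([θ_*, θ_**] × ℝ); otherwise, the solution starting from (θ₀, 0) is not a leapfrogging solution. -/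

import Mathlib

noncomputable section

open Real Set

/-- θ_β = arctan(1/√β). -/
def thetaB (β : ℝ) : ℝ := Real.arctan (1 / Real.sqrt β)

/-- The phase space Ω_β. -/
def OmegaB (β : ℝ) : Set (ℝ × ℝ) :=
  {p | 0 < p.1 ∧ p.1 < Real.pi / 2 ∧ p ≠ (thetaB β, 0)}

/-- D(θ,W) = (d²/β)(√β sin θ − cos θ)² + W². -/
def Dfun (d β θ W : ℝ) : ℝ :=
  d ^ 2 / β * (Real.sqrt β * Real.sin θ - Real.cos θ) ^ 2 + W ^ 2

/-- F₁(θ,W) = α √β W / D(θ,W)^{3/2}. -/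
def F1 (α d β θ W : ℝ) : ℝ :=
  α * Real.sqrt β * W / Dfun d β θ W ^ ((3 : ℝ) / 2)

/-- F₂(θ,W). -/
def F2 (α d β θ W : ℝ) : ℝ :=
  (β ^ ((3 : ℝ) / 2) * Real.sin θ - Real.cos θ) / (d * Real.sin θ * Real.cos θ) -
    α * d ^ 2 * (Real.sin θ + Real.sqrt β * Real.cos θ) *
        (Real.sqrt β * Real.sin θ - Real.cos θ) /
      (Real.sqrt β * Dfun d β θ W ^ ((3 : ℝ) / 2))

/-- The Hamiltonian H(θ,W). -/
def Ham (α d β θ W : ℝ) : ℝ :=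
  1 / (2 * d) *
      Real.log (((1 - Real.sin θ) ^ (β ^ ((3 : ℝ) / 2)) * (1 - Real.cos θ)) /
        ((1 + Real.sin θ) ^ (β ^ ((3 : ℝ) / 2)) * (1 + Real.cos θ))) -
    α * Real.sqrt β / Dfun d β θ W ^ ((1 : ℝ) / 2)

/-- A time-global solution of the system (3.4), staying in the phase space Ω_β. -/
def IsSolution (α d β : ℝ) (θ W : ℝ → ℝ) : Prop :=
  (∀ t : ℝ, (θ t, W t) ∈ OmegaB β) ∧
  (∀ t : ℝ, HasDerivAt θ (F1 α d β (θ t) (W t)) t) ∧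
  (∀ t : ℝ, HasDerivAt W (F2 α d β (θ t) (W t)) t)

/-- A leapfrogging solution: a non-constant periodic solution whose (closed）orbit
revolves around the point (θ_β, 0); in particular it meets both line segments
(0, θ_β) × {0} and (θ_β, π/2) × {0}. -/
def IsLeapfrog (β : ℝ) (θ W : ℝ → ℝ) : Prop :=
  (∃ T : ℝ, 0 < T ∧ ∀ t : ℝ, θ (t + T) = θ t ∧ W (t + T) = W t) ∧
  (∃ t s : ℝ, (θ t, W t) ≠ (θ s, W s)) ∧
  (∃ t₁ : ℝ, θ t₁ ∈ Set.Ioo 0 (thetaB β) ∧ W t₁ = 0) ∧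
  (∃ t₂ : ℝ, θ t₂ ∈ Set.Ioo (thetaB β) (Real.pi / 2) ∧ W t₂ = 0)

/-!
The system is Hamiltonian, `dθ/dt = ∂H/∂W` and `dW/dt = -∂H/∂θ`, and the reflection `W ↦ -W`
reverses time. On the axis, `H(·, 0)` tends to `-∞` at `0`, `θ_β` and `π/2`, and its only critical
points are the two equilibria, so these are its maxima on either side of `θ_β`; moreover
`H(x, 0) ≤ H(x, w)`.

A solution of energy `E < min (H(θs, 0)) (H(θss, 0))` can therefore not cross the lines `θ = θs`
and `θ = θss`. Between them `W² = (α√β / (U(θ) - E))² - D(θ, 0)`, where `U`, the part of `H` that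
depends on `θ` alone, is concave and hence exceeds `E`. If `W` were eventually nonzero, then `θ`
would be monotone and the solution would converge, necessarily to an equilibrium of energy `E`,
which does not exist. So `W` vanishes at consecutive times `s < t`, between which `θ` is strictly
monotone; as `H(·, 0)` is injective on the part of the strip on each side of `θ_β`, the two zeros
lie on opposite sides. Reflecting at both of them gives the period `2(t - s)`. The orbit is the
whole energy level in the strip, because the level has at most the two points `(x, ±w)` above
each `x`.

Conversely, a leapfrogging orbit meets the axis on both sides of `θ_β`, so its energy is at most
both maxima of `H(·, 0)`; equality would make it an equilibrium.
-/

open Filter Topology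

section Calculus

theorem strictMonoOn_Ioc_of_deriv_ne_zero_of_tendsto_atBot {f : ℝ → ℝ} {a b : ℝ}
    (hf : ContinuousOn f (Ioc a b)) (hf' : ∀ x ∈ Ioo a b, deriv f x ≠ 0)
    (hlim : Tendsto f (𝓝[>] a) atBot) : StrictMonoOn f (Ioc a b) := by
  rcases le_or_gt b a with hba | hab
  · rw [Ioc_eq_empty hba.not_gt]
    exact fun _ h => h.elim
  -- By Darboux's theorem `deriv f` has constant sign; the limit at `a` excludes the negative one.
  have hderiv : ∀ x ∈ Ioo a b, HasDerivWithinAt f (deriv f x) (Ioo a b) x := fun x hx =>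
    (differentiableAt_of_deriv_ne_zero (hf' x hx)).hasDerivAt.hasDerivWithinAt
  rcases hasDerivWithinAt_forall_lt_or_forall_gt_of_forall_ne (convex_Ioo a b) hderiv hf'
    with hneg | hpos
  · have hanti : StrictAntiOn f (Ioc a b) :=
      strictAntiOn_of_deriv_neg (convex_Ioc a b) hf (by rwa [interior_Ioc])
    obtain ⟨x, hxb, hx⟩ :=
      ((hlim.eventually_lt_atBot (f b)).and (Ioo_mem_nhdsGT hab)).exists
    exact absurd (hanti ⟨hx.1, hx.2.le⟩ (right_mem_Ioc.2 hab) hx.2) hxb.not_gt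
  · exact strictMonoOn_of_deriv_pos (convex_Ioc a b) hf (by rwa [interior_Ioc])

theorem strictAntiOn_Ico_of_deriv_ne_zero_of_tendsto_atBot {f : ℝ → ℝ} {a b : ℝ}
    (hf : ContinuousOn f (Ico a b)) (hf' : ∀ x ∈ Ioo a b, deriv f x ≠ 0)
    (hlim : Tendsto f (𝓝[<] b) atBot) : StrictAntiOn f (Ico a b) := by
  have hmem {x : ℝ} (hx : x ∈ Ico a b) : -x ∈ Ioc (-b) (-a) :=
    ⟨neg_lt_neg hx.2, neg_le_neg hx.1⟩
  have hmono : StrictMonoOn (fun x => f (-x)) (Ioc (-b) (-a)) := by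
    refine strictMonoOn_Ioc_of_deriv_ne_zero_of_tendsto_atBot
      (hf.comp continuousOn_neg fun x hx => ⟨le_neg.1 hx.2, neg_lt.1 hx.1⟩) (fun x hx => ?_)
      (hlim.comp tendsto_neg_nhdsGT_neg)
    rw [deriv_comp_neg]
    exact neg_ne_zero.2 (hf' (-x) ⟨lt_neg.1 hx.2, neg_lt.1 hx.1⟩)
  intro x hx y hy hxy
  simpa using hmono (hmem hy) (hmem hx) (neg_lt_neg hxy)

theorem exists_tendsto_atTop_of_deriv_ne_zero {f : ℝ → ℝ} {a b t₀ : ℝ} (hf : Continuous f)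
    (hab : ∀ t, f t ∈ Icc a b) (hf' : ∀ t > t₀, deriv f t ≠ 0) :
    ∃ L, Tendsto f atTop (𝓝 L) := by
  have hderiv : ∀ t ∈ Ioi t₀, HasDerivWithinAt f (deriv f t) (Ioi t₀) t := fun t ht =>
    (differentiableAt_of_deriv_ne_zero (hf' t ht)).hasDerivAt.hasDerivWithinAt
  have heventually : (fun t => f (max t t₀)) =ᶠ[atTop] f := by
    filter_upwards [eventually_ge_atTop t₀] with t ht
    rw [max_eq_left ht]
  have hmax (t : ℝ) : max t t₀ ∈ Ici t₀ := le_max_right t t₀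
  rcases hasDerivWithinAt_forall_lt_or_forall_gt_of_forall_ne (convex_Ioi t₀) hderiv hf'
    with hneg | hpos
  · have hanti : StrictAntiOn f (Ici t₀) :=
      strictAntiOn_of_deriv_neg (convex_Ici t₀) hf.continuousOn (by rwa [interior_Ici])
    have hanti' : Antitone fun t => f (max t t₀) := fun s t hst =>
      hanti.antitoneOn (hmax s) (hmax t) (max_le_max_right t₀ hst)
    exact ⟨_, (tendsto_atTop_ciInf hanti' ⟨a, forall_mem_range.2 fun t => (hab _).1⟩).congr'
      heventually⟩
  · have hmono : StrictMonoOn f (Ici t₀) :=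
      strictMonoOn_of_deriv_pos (convex_Ici t₀) hf.continuousOn (by rwa [interior_Ici])
    have hmono' : Monotone fun t => f (max t t₀) := fun s t hst =>
      hmono.monotoneOn (hmax s) (hmax t) (max_le_max_right t₀ hst)
    exact ⟨_, (tendsto_atTop_ciSup hmono' ⟨b, forall_mem_range.2 fun t => (hab _).2⟩).congr'
      heventually⟩

theorem exists_tendsto_atTop_of_tendsto_sq {f : ℝ → ℝ} {c t₀ : ℝ} (hf : ContinuousOn f (Ioi t₀))
    (hne : ∀ t > t₀, f t ≠ 0) (hsq : Tendsto (fun t => f t ^ 2) atTop (𝓝 c)) :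
    ∃ L, Tendsto f atTop (𝓝 L) := by
  have habs : Tendsto (fun t => |f t|) atTop (𝓝 √c) := by
    simpa only [Real.sqrt_sq_eq_abs] using hsq.sqrt
  have hsign : EqOn f (fun t => |f t|) (Ioi t₀) ∨ EqOn f (-fun t => |f t|) (Ioi t₀) :=
    isPreconnected_Ioi.eq_or_eq_neg_of_sq_eq hf hf.abs (fun t _ => (sq_abs (f t)).symm)
      fun ht => abs_ne_zero.2 (hne _ ht)
  rcases hsign with hpos | hneg
  · exact ⟨√c, habs.congr' ((eventually_gt_atTop t₀).mono fun t ht => (hpos ht).symm)⟩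
  · exact ⟨-√c, habs.neg.congr' ((eventually_gt_atTop t₀).mono fun t ht => (hneg ht).symm)⟩

theorem exists_next_zero {f : ℝ → ℝ} {a b : ℝ} (hf : Continuous f)
    (hne : ∀ᶠ t in 𝓝[>] a, f t ≠ 0) (hab : a < b) (hb : f b = 0) :
    ∃ c > a, f c = 0 ∧ ∀ t ∈ Ioo a c, f t ≠ 0 := by
  obtain ⟨u, hau, hu⟩ := (mem_nhdsGT_iff_exists_Ioo_subset' hab).1 hne
  have hub : u ≤ b := not_lt.1 fun hbu => hu ⟨hab, hbu⟩ hb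
  obtain ⟨c, ⟨hcI, hc⟩, hleast⟩ : ∃ c, IsLeast (Icc u b ∩ f ⁻¹' {0}) c :=
    (isCompact_Icc.inter_right (isClosed_singleton.preimage hf)).exists_isLeast
      ⟨b, ⟨hub, le_rfl⟩, hb⟩
  refine ⟨c, lt_of_lt_of_le hau hcI.1, hc, fun t ht ht0 => ?_⟩
  rcases lt_or_ge t u with htu | hut
  · exact hu ⟨ht.1, htu⟩ ht0
  · exact (hleast ⟨⟨hut, ht.2.le.trans hcI.2⟩, ht0⟩).not_gt ht.2

end Calculus

section IntegralCurve

variable {E : Type*} [NormedAddCommGroup E] [NormedSpace ℝ E] {v : E → E} {γ δ : ℝ → E}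

theorem isIntegralCurve_eq_of_contDiffAt (hv : ∀ t, ContDiffAt ℝ 1 v (γ t))
    (hγ : IsIntegralCurve γ fun _ => v) (hδ : IsIntegralCurve δ fun _ => v) {t₀ : ℝ}
    (h : γ t₀ = δ t₀) : γ = δ := by
  have hγc : Continuous γ := continuous_iff_continuousAt.2 fun t => (hγ t).continuousAt
  have hδc : Continuous δ := continuous_iff_continuousAt.2 fun t => (hδ t).continuousAt
  have hopen : IsOpen {t | γ t = δ t} := by
    refine isOpen_iff_mem_nhds.2 fun t (ht : γ t = δ t) => ?_
    obtain ⟨K, s, hs, hK⟩ := (hv t).exists_lipschitzOnWith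
    exact ODE_solution_unique_of_eventually (s := fun _ => s) (Eventually.of_forall fun _ => hK)
      ((hγc.continuousAt.eventually hs).mono fun u hu => ⟨hγ u, hu⟩)
      ((hδc.continuousAt.eventually (ht ▸ hs)).mono fun u hu => ⟨hδ u, hu⟩) ht
  have huniv : {t | γ t = δ t} = univ := IsClopen.eq_univ ⟨isClosed_eq hγc hδc, hopen⟩ ⟨t₀, h⟩
  exact funext (eq_univ_iff_forall.1 huniv)

theorem isIntegralCurve_eq_const_of_eq_zero (hv : ∀ t, ContDiffAt ℝ 1 v (γ t))
    (hγ : IsIntegralCurve γ fun _ => v) {t₀ : ℝ} (h : v (γ t₀) = 0) : γ = fun _ => γ t₀ :=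
  isIntegralCurve_eq_of_contDiffAt hv hγ
    (fun t => (hasDerivAt_const t (γ t₀)).congr_deriv h.symm) (t₀ := t₀) rfl

theorem isIntegralCurve_reflect {R : E →L[ℝ] E} (hR : ∀ p, v (R p) = -R (v p))
    (hv : ∀ t, ContDiffAt ℝ 1 v (γ t)) (hγ : IsIntegralCurve γ fun _ => v) {τ : ℝ}
    (hτ : R (γ τ) = γ τ) (t : ℝ) : γ (2 * τ - t) = R (γ t) := by
  have hreflected : IsIntegralCurve (fun s => R (γ (2 * τ - s))) fun _ => v := fun s => by
    have hcomp : HasDerivAt (fun s => γ (2 * τ - s)) (-v (γ (2 * τ - s))) s := by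
      simpa [Function.comp_def] using (hγ (2 * τ - s)).scomp s ((hasDerivAt_id s).const_sub (2 * τ))
    simpa [hR, Function.comp_def] using R.hasFDerivAt.comp_hasDerivAt s hcomp
  have heq := isIntegralCurve_eq_of_contDiffAt hv hγ hreflected (t₀ := τ)
    (by rw [two_mul, add_sub_cancel_right, hτ])
  simpa using congrFun heq (2 * τ - t)

theorem isIntegralCurve_periodic_of_reflect {R : E →L[ℝ] E} (hR : ∀ p, v (R p) = -R (v p))
    (hRR : ∀ p, R (R p) = p) (hv : ∀ t, ContDiffAt ℝ 1 v (γ t))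
    (hγ : IsIntegralCurve γ fun _ => v) {σ τ : ℝ} (hσ : R (γ σ) = γ σ) (hτ : R (γ τ) = γ τ) :
    Function.Periodic γ (2 * (τ - σ)) := fun t =>
  calc γ (t + 2 * (τ - σ)) = γ (2 * τ - (2 * σ - t)) := by ring_nf
    _ = R (γ (2 * σ - t)) := isIntegralCurve_reflect hR hv hγ hτ _
    _ = R (R (γ t)) := by rw [isIntegralCurve_reflect hR hv hγ hσ]
    _ = γ t := hRR _

theorem eq_zero_of_isIntegralCurve_of_tendsto (hγ : IsIntegralCurve γ fun _ => v) {p : E}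
    (hv : ContinuousAt v p) (hlim : Tendsto γ atTop (𝓝 p)) : v p = 0 := by
  -- Over a unit time the displacement tends to `0`, while the velocity stays close to `v p`.
  have hshift : Tendsto (fun t : ℝ => γ (t + 1) - γ t - v p) atTop (𝓝 (p - p - v p)) :=
    ((hlim.comp (tendsto_atTop_add_const_right _ 1 tendsto_id)).sub hlim).sub_const _
  have hsmall : Tendsto (fun t : ℝ => γ (t + 1) - γ t - v p) atTop (𝓝 0) := by
    refine Metric.tendsto_atTop.2 fun ε hε => ?_
    obtain ⟨T, hT⟩ := Metric.tendsto_atTop.1 (hv.tendsto.comp hlim) (ε / 2) (half_pos hε)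
    refine ⟨T, fun t ht => ?_⟩
    have hbound := (convex_Icc t (t + 1)).norm_image_sub_le_of_norm_hasDerivWithin_le
      (f := fun s => γ s - (s - t) • v p) (f' := fun s => v (γ s) - v p) (C := ε / 2)
      (fun s _ => ((hγ s).sub
        (by simpa using ((hasDerivAt_id s).sub_const t).smul_const (v p))).hasDerivWithinAt)
      (fun s hs => by simpa [dist_eq_norm] using (hT s (ht.trans hs.1)).le)
      (left_mem_Icc.2 (by linarith)) (right_mem_Icc.2 (by linarith))
    rw [dist_zero_right]
    refine lt_of_le_of_lt ?_ (half_lt_self hε)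
    simpa [sub_right_comm] using hbound
  simpa using tendsto_nhds_unique hshift hsmall

end IntegralCurve

section PhaseSpace

variable {d β x w : ℝ}

theorem sin_mem_Ioo (hx : x ∈ Ioo 0 (π / 2)) : sin x ∈ Ioo 0 1 := by
  refine ⟨sin_pos_of_mem_Ioo ⟨hx.1, by linarith [hx.1, hx.2]⟩, ?_⟩
  simpa using sin_lt_sin_of_lt_of_le_pi_div_two (by linarith [hx.1, hx.2]) le_rfl hx.2

theorem cos_mem_Ioo (hx : x ∈ Ioo 0 (π / 2)) : cos x ∈ Ioo 0 1 := by
  rw [← sin_pi_div_two_sub]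
  exact sin_mem_Ioo ⟨by linarith [hx.2], by linarith [hx.1]⟩

theorem thetaB_mem_Ioo (hβ : 0 < β) : thetaB β ∈ Ioo 0 (π / 2) :=
  ⟨arctan_pos.2 (one_div_pos.2 (sqrt_pos.2 hβ)), arctan_lt_pi_div_two _⟩

theorem sqrt_mul_sin_sub_cos_eq_zero_iff (hβ : 0 < β) (hx : x ∈ Ioo 0 (π / 2)) :
    √β * sin x - cos x = 0 ↔ x = thetaB β := by
  have hsqrt : √β ≠ 0 := (sqrt_pos.2 hβ).ne'
  have hcos : cos x ≠ 0 := (cos_mem_Ioo hx).1.ne'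
  have htan : √β * sin x - cos x = 0 ↔ tan x = 1 / √β := by
    rw [tan_eq_sin_div_cos, div_eq_div_iff hcos hsqrt, one_mul, mul_comm, sub_eq_zero]
  rw [htan, thetaB]
  constructor
  · intro h
    rw [← h, arctan_tan (by linarith [hx.1, hx.2]) hx.2]
  · rintro rfl
    exact tan_arctan _

theorem mem_diff_of_lt_thetaB (hx₀ : 0 < x) (hx : x < thetaB β) :
    x ∈ Ioo 0 (π / 2) \ {thetaB β} :=
  ⟨⟨hx₀, hx.trans (arctan_lt_pi_div_two _)⟩, hx.ne⟩

theorem mem_diff_of_thetaB_lt (hβ : 0 < β) (hx : thetaB β < x) (hx' : x < π / 2) :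
    x ∈ Ioo 0 (π / 2) \ {thetaB β} :=
  ⟨⟨(thetaB_mem_Ioo hβ).1.trans hx, hx'⟩, hx.ne'⟩

theorem mem_OmegaB_of_mem_diff (hx : x ∈ Ioo 0 (π / 2) \ {thetaB β}) (w : ℝ) :
    (x, w) ∈ OmegaB β :=
  ⟨hx.1.1, hx.1.2, fun h => hx.2 (Prod.mk.inj h).1⟩

theorem mem_Ioo_of_mem_OmegaB (h : (x, w) ∈ OmegaB β) : x ∈ Ioo 0 (π / 2) :=
  ⟨h.1, h.2.1⟩

theorem Dfun_eq_add_sq (d β x w : ℝ) : Dfun d β x w = Dfun d β x 0 + w ^ 2 := by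
  simp [Dfun]

theorem Dfun_neg (d β x w : ℝ) : Dfun d β x (-w) = Dfun d β x w := by
  simp [Dfun]

theorem contDiff_Dfun (d β : ℝ) : ContDiff ℝ 1 fun p : ℝ × ℝ => Dfun d β p.1 p.2 := by
  unfold Dfun
  fun_prop

theorem tendsto_Dfun {ι : Type*} {l : Filter ι} {y v : ι → ℝ} (hy : Tendsto y l (𝓝 x))
    (hv : Tendsto v l (𝓝 w)) : Tendsto (fun i => Dfun d β (y i) (v i)) l (𝓝 (Dfun d β x w)) := by
  have hcont : ContinuousAt (fun p : ℝ × ℝ => Dfun d β p.1 p.2) (x, w) :=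
    (contDiff_Dfun d β).continuous.continuousAt
  simpa only [Function.comp_def] using hcont.tendsto.comp (hy.prodMk_nhds hv)

theorem Dfun_nonneg (hβ : 0 < β) : 0 ≤ Dfun d β x w := by
  rw [Dfun]
  positivity

theorem Dfun_pos_iff (hd : 0 < d) (hβ : 0 < β) (hx : x ∈ Ioo 0 (π / 2)) :
    0 < Dfun d β x w ↔ (x, w) ∈ OmegaB β := by
  have hfactor : d ^ 2 / β ≠ 0 := by positivity
  have hzero : Dfun d β x w = 0 ↔ (x, w) = (thetaB β, 0) := by
    rw [Dfun, add_eq_zero_iff_of_nonneg (by positivity) (sq_nonneg w), mul_eq_zero,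
      or_iff_right hfactor, sq_eq_zero_iff, sq_eq_zero_iff,
      sqrt_mul_sin_sub_cos_eq_zero_iff hβ hx, Prod.mk.injEq]
  rw [(Dfun_nonneg hβ).lt_iff_ne', Ne, hzero]
  exact ⟨fun h => ⟨hx.1, hx.2, h⟩, fun h => h.2.2⟩

theorem Dfun_pos (hd : 0 < d) (hβ : 0 < β) (h : (x, w) ∈ OmegaB β) : 0 < Dfun d β x w :=
  (Dfun_pos_iff hd hβ (mem_Ioo_of_mem_OmegaB h)).2 h

theorem rpow_three_halves {D : ℝ} (hD : 0 ≤ D) : D ^ ((3 : ℝ) / 2) = √D ^ 3 := by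
  rw [rpow_div_two_eq_sqrt _ hD, ← rpow_natCast, Nat.cast_ofNat]

end PhaseSpace

section SelfEnergy

/-- The primitive `log (tan (x / 2))` of `1 / sin x` on `(0, π)`. -/
def logTanHalf (x : ℝ) : ℝ := log (tan (x / 2))

theorem log_one_sub_cos_div_one_add_cos (x : ℝ) :
    log ((1 - cos x) / (1 + cos x)) = 2 * logTanHalf x := by
  have hcos : cos x = 2 * cos (x / 2) ^ 2 - 1 := by
    rw [← cos_two_mul, mul_div_cancel₀ x two_ne_zero]
  have hsin : 1 - cos x = 2 * sin (x / 2) ^ 2 := by rw [hcos, sin_sq]; ring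
  rw [hsin, hcos, add_sub_cancel, mul_div_mul_left _ _ two_ne_zero, ← div_pow,
    ← tan_eq_sin_div_cos, log_pow, Nat.cast_ofNat, logTanHalf]

theorem hasDerivAt_logTanHalf {x : ℝ} (hx : x ∈ Ioo 0 π) :
    HasDerivAt logTanHalf (sin x)⁻¹ x := by
  have hx' : x / 2 ∈ Ioo 0 (π / 2) := ⟨by linarith [hx.1], by linarith [hx.2]⟩
  have hsin : 0 < sin (x / 2) := (sin_mem_Ioo hx').1
  have hcos : 0 < cos (x / 2) := (cos_mem_Ioo hx').1
  have htan : tan (x / 2) ≠ 0 := by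
    rw [tan_eq_sin_div_cos]
    positivity
  have htan' : HasDerivAt (fun y => tan (y / 2)) (1 / cos (x / 2) ^ 2 * (1 / 2)) x :=
    (hasDerivAt_tan hcos.ne').comp x (h := fun y : ℝ => y / 2) ((hasDerivAt_id x).div_const 2)
  refine (htan'.log htan).congr_deriv ?_
  rw [← mul_div_cancel₀ x two_ne_zero, sin_two_mul, mul_div_cancel₀ x two_ne_zero,
    tan_eq_sin_div_cos]
  field_simp

theorem tendsto_logTanHalf_zero : Tendsto logTanHalf (𝓝[>] 0) atBot := by
  refine tendsto_log_nhdsGT_zero.comp (tendsto_nhdsWithin_iff.2 ⟨?_, ?_⟩)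
  · have hcont : ContinuousAt (fun x : ℝ => tan (x / 2)) 0 :=
      (continuousAt_tan.2 (by simp)).comp (f := fun x : ℝ => x / 2) (by fun_prop)
    simpa using hcont.tendsto.mono_left nhdsWithin_le_nhds
  · filter_upwards [Ioo_mem_nhdsGT pi_pos] with x hx
    exact tan_pos_of_pos_of_lt_pi_div_two (by linarith [hx.1]) (by linarith [hx.2])

/-- The part of `Ham` that does not depend on `W`, in terms of `logTanHalf`; see `Ham_eq`. -/
def selfEnergy (d β x : ℝ) : ℝ :=
  (logTanHalf x + β ^ ((3 : ℝ) / 2) * logTanHalf (π / 2 - x)) / d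

variable {α d β x w : ℝ}

theorem hasDerivAt_selfEnergy (hx : x ∈ Ioo 0 (π / 2)) :
    HasDerivAt (selfEnergy d β) (((sin x)⁻¹ - β ^ ((3 : ℝ) / 2) * (cos x)⁻¹) / d) x := by
  have hleft := hasDerivAt_logTanHalf (x := x) ⟨hx.1, by linarith [hx.1, hx.2]⟩
  have hright := hasDerivAt_logTanHalf (x := π / 2 - x)
    ⟨by linarith [hx.2], by linarith [hx.1, hx.2]⟩
  have hcomp := hright.comp x ((hasDerivAt_id x).const_sub (π / 2))
  refine ((hleft.add (hcomp.const_mul (β ^ ((3 : ℝ) / 2)))).div_const d).congr_deriv ?_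
  rw [sin_pi_div_two_sub]
  ring

theorem concaveOn_selfEnergy (hd : 0 < d) (hβ : 0 ≤ β) :
    ConcaveOn ℝ (Ioo 0 (π / 2)) (selfEnergy d β) := by
  refine AntitoneOn.concaveOn_of_deriv (convex_Ioo _ _)
    (fun x hx => (hasDerivAt_selfEnergy hx).continuousAt.continuousWithinAt)
    (fun x hx => ?_) ?_ <;> rw [interior_Ioo] at *
  · exact (hasDerivAt_selfEnergy hx).differentiableAt.differentiableWithinAt
  intro x hx y hy hxy
  rw [(hasDerivAt_selfEnergy hx).deriv, (hasDerivAt_selfEnergy hy).deriv]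
  have hsin : 0 < sin x := (sin_mem_Ioo hx).1
  have hcos : 0 < cos y := (cos_mem_Ioo hy).1
  have hsin_le : sin x ≤ sin y :=
    sin_le_sin_of_le_of_le_pi_div_two (by linarith [hx.1, hx.2]) hy.2.le hxy
  have hcos_le : cos y ≤ cos x :=
    cos_le_cos_of_nonneg_of_le_pi hx.1.le (by linarith [hy.1, hy.2]) hxy
  gcongr

theorem tendsto_selfEnergy_zero (hd : 0 < d) : Tendsto (selfEnergy d β) (𝓝[>] 0) atBot := by
  have hright : ContinuousAt (fun x => logTanHalf (π / 2 - x)) 0 := by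
    refine ContinuousAt.comp (g := logTanHalf) (f := fun x : ℝ => π / 2 - x) ?_ (by fun_prop)
    exact (hasDerivAt_logTanHalf ⟨by simp [pi_pos], by linarith [pi_pos]⟩).continuousAt
  exact (tendsto_logTanHalf_zero.atBot_add ((hright.tendsto.mono_left nhdsWithin_le_nhds).const_mul
    (β ^ ((3 : ℝ) / 2)))).atBot_div_const hd

theorem tendsto_selfEnergy_pi_div_two (hd : 0 < d) (hβ : 0 < β) :
    Tendsto (selfEnergy d β) (𝓝[<] (π / 2)) atBot := by
  have hleft : Tendsto logTanHalf (𝓝[<] (π / 2)) (𝓝 (logTanHalf (π / 2))) :=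
    (hasDerivAt_logTanHalf ⟨pi_div_two_pos, by linarith [pi_pos]⟩).continuousAt.tendsto.mono_left
      nhdsWithin_le_nhds
  have hreflect : Tendsto (fun x => π / 2 - x) (𝓝[<] (π / 2)) (𝓝[>] 0) := by
    refine tendsto_nhdsWithin_iff.2
      ⟨?_, eventually_mem_nhdsWithin.mono fun x hx => sub_pos.2 (mem_Iio.1 hx)⟩
    have hcont : Continuous fun x => π / 2 - x := by fun_prop
    simpa using (hcont.tendsto (π / 2)).mono_left nhdsWithin_le_nhds
  exact (hleft.add_atBot ((tendsto_logTanHalf_zero.comp hreflect).const_mul_atBot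
    (rpow_pos_of_pos hβ _))).atBot_div_const hd

theorem Ham_eq (hx : x ∈ Ioo 0 (π / 2)) (α d β w : ℝ) :
    Ham α d β x w = selfEnergy d β x - α * √β / √(Dfun d β x w) := by
  have hsin_sub : 0 < 1 - sin x := sub_pos.2 (sin_mem_Ioo hx).2
  have hcos_sub : 0 < 1 - cos x := sub_pos.2 (cos_mem_Ioo hx).2
  have hsin_add : 0 < 1 + sin x := add_pos one_pos (sin_mem_Ioo hx).1
  have hcos_add : 0 < 1 + cos x := add_pos one_pos (cos_mem_Ioo hx).1
  have hlog := log_one_sub_cos_div_one_add_cos (π / 2 - x)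
  rw [cos_pi_div_two_sub] at hlog
  rw [Ham, ← sqrt_eq_rpow, mul_div_mul_comm, ← div_rpow hsin_sub.le hsin_add.le,
    log_mul (by positivity) (by positivity), log_rpow (by positivity), hlog,
    log_one_sub_cos_div_one_add_cos, selfEnergy]
  ring

end SelfEnergy

section Hamiltonian

variable {α d β x w E : ℝ}

theorem hasDerivAt_Dfun {x w : ℝ → ℝ} {t x' w' : ℝ} (hx : HasDerivAt x x' t)
    (hw : HasDerivAt w w' t) :
    HasDerivAt (fun s => Dfun d β (x s) (w s))
      (2 * (d ^ 2 / β * (√β * sin (x t) - cos (x t)) * (sin (x t) + √β * cos (x t)) * x' +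
        w t * w')) t := by
  have hsq := (((hx.sin.const_mul √β).sub hx.cos).pow 2).const_mul (d ^ 2 / β)
  refine (hsq.add (hw.pow 2)).congr_deriv ?_
  simp only [Pi.sub_apply]
  ring

theorem hasDerivAt_Ham (hd : 0 < d) (hβ : 0 < β) {x w : ℝ → ℝ} {t x' w' : ℝ}
    (h : (x t, w t) ∈ OmegaB β) (hx : HasDerivAt x x' t) (hw : HasDerivAt w w' t) :
    HasDerivAt (fun s => Ham α d β (x s) (w s))
      (-F2 α d β (x t) (w t) * x' + F1 α d β (x t) (w t) * w') t := by
  have hxt : x t ∈ Ioo 0 (π / 2) := mem_Ioo_of_mem_OmegaB h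
  have hsin : 0 < sin (x t) := (sin_mem_Ioo hxt).1
  have hcos : 0 < cos (x t) := (cos_mem_Ioo hxt).1
  have hD : 0 < Dfun d β (x t) (w t) := Dfun_pos hd hβ h
  have hsqrtD : 0 < √(Dfun d β (x t) (w t)) := sqrt_pos.2 hD
  have hinteraction := (hasDerivAt_const t (α * √β)).div
    ((hasDerivAt_Dfun (d := d) (β := β) hx hw).sqrt hD.ne') hsqrtD.ne'
  have hHam : (fun s => Ham α d β (x s) (w s)) =ᶠ[𝓝 t] fun s =>
      selfEnergy d β (x s) - α * √β / √(Dfun d β (x s) (w s)) := by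
    filter_upwards [hx.continuousAt.eventually (Ioo_mem_nhds hxt.1 hxt.2)] with s hs
    exact Ham_eq hs α d β (w s)
  refine ((((hasDerivAt_selfEnergy hxt).comp t hx).sub hinteraction).congr_of_eventuallyEq
    hHam).congr_deriv ?_
  rw [F1, F2, rpow_three_halves hD.le]
  have hβsq : d ^ 2 / β = d ^ 2 / √β ^ 2 := by rw [sq_sqrt hβ.le]
  rw [hβsq]
  field_simp
  ring

theorem hasDerivAt_Ham_axis (hd : 0 < d) (hβ : 0 < β) (hx : (x, 0) ∈ OmegaB β) :
    HasDerivAt (fun y => Ham α d β y 0) (-F2 α d β x 0) x := by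
  simpa using hasDerivAt_Ham (α := α) hd hβ (x := id) (w := fun _ => 0) hx (hasDerivAt_id x)
    (hasDerivAt_const x 0)

theorem Ham_le_selfEnergy (hα : 0 ≤ α) (hx : x ∈ Ioo 0 (π / 2)) :
    Ham α d β x w ≤ selfEnergy d β x := by
  rw [Ham_eq hx]
  exact sub_le_self _ (by positivity)

theorem Ham_zero_le (hα : 0 ≤ α) (hd : 0 < d) (hβ : 0 < β) (hx : (x, 0) ∈ OmegaB β) :
    Ham α d β x 0 ≤ Ham α d β x w := by
  have hD : 0 < √(Dfun d β x 0) := sqrt_pos.2 (Dfun_pos hd hβ hx)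
  have hD_le : Dfun d β x 0 ≤ Dfun d β x w := by
    rw [Dfun_eq_add_sq d β x w]
    exact le_add_of_nonneg_right (sq_nonneg w)
  rw [Ham_eq (mem_Ioo_of_mem_OmegaB hx), Ham_eq (mem_Ioo_of_mem_OmegaB hx)]
  gcongr

theorem Ham_eq_iff_Dfun_eq (hα : 0 < α) (hβ : 0 < β) (hx : x ∈ Ioo 0 (π / 2))
    (hE : E < selfEnergy d β x) :
    Ham α d β x w = E ↔ Dfun d β x w = (α * √β / (selfEnergy d β x - E)) ^ 2 := by
  have hswap : α * √β / √(Dfun d β x w) = selfEnergy d β x - E ↔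
      √(Dfun d β x w) = α * √β / (selfEnergy d β x - E) := by
    constructor <;> intro h
    · rw [← h, div_div_cancel₀ (by positivity)]
    · rw [h, div_div_cancel₀ (by positivity)]
  rw [Ham_eq hx, sub_eq_iff_eq_add', ← sub_eq_iff_eq_add, eq_comm, hswap,
    sqrt_eq_iff_eq_sq (Dfun_nonneg hβ) (div_nonneg (by positivity) (sub_nonneg.2 hE.le))]

theorem mem_OmegaB_of_Ham_eq (hα : 0 < α) (hd : 0 < d) (hβ : 0 < β) (hx : x ∈ Ioo 0 (π / 2))
    (hE : E < selfEnergy d β x) (h : Ham α d β x w = E) : (x, w) ∈ OmegaB β := by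
  have hsub : 0 < selfEnergy d β x - E := sub_pos.2 hE
  rw [← Dfun_pos_iff hd hβ hx, (Ham_eq_iff_Dfun_eq hα hβ hx hE).1 h]
  exact pow_pos (div_pos (by positivity) hsub) 2

theorem Ham_eq_of_tendsto (hα : 0 < α) (hβ : 0 < β) {ι : Type*} {l : Filter ι} [l.NeBot]
    {y v : ι → ℝ} (hy : Tendsto y l (𝓝 x)) (hv : Tendsto v l (𝓝 w)) (hx : x ∈ Ioo 0 (π / 2))
    (hE : E < selfEnergy d β x) (hHam : ∀ i, Ham α d β (y i) (v i) = E) : Ham α d β x w = E := by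
  have hself : Tendsto (fun i => selfEnergy d β (y i)) l (𝓝 (selfEnergy d β x)) :=
    (hasDerivAt_selfEnergy hx).continuousAt.tendsto.comp hy
  have hD : Tendsto (fun i => Dfun d β (y i) (v i)) l (𝓝 (Dfun d β x w)) :=
    tendsto_Dfun hy hv
  have hlevel : ∀ᶠ i in l, (α * √β / (selfEnergy d β (y i) - E)) ^ 2 = Dfun d β (y i) (v i) := by
    filter_upwards [hy.eventually (isOpen_Ioo.mem_nhds hx), hself.eventually_const_lt hE]
      with i hi hiE
    exact ((Ham_eq_iff_Dfun_eq hα hβ hi hiE).1 (hHam i)).symm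
  exact (Ham_eq_iff_Dfun_eq hα hβ hx hE).2 (tendsto_nhds_unique hD
    (((tendsto_const_nhds.div (hself.sub_const E) (sub_pos.2 hE).ne').pow 2).congr' hlevel))

theorem continuousOn_Ham_axis (α : ℝ) (hd : 0 < d) (hβ : 0 < β) :
    ContinuousOn (fun x => Ham α d β x 0) (Ioo 0 (π / 2) \ {thetaB β}) := fun _ hx =>
  (hasDerivAt_Ham_axis hd hβ (mem_OmegaB_of_mem_diff hx 0)).continuousAt.continuousWithinAt

theorem tendsto_Ham_axis_zero (hα : 0 ≤ α) (hd : 0 < d) :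
    Tendsto (fun x => Ham α d β x 0) (𝓝[>] 0) atBot := by
  refine tendsto_atBot_mono' _ ?_ (tendsto_selfEnergy_zero (β := β) hd)
  filter_upwards [Ioo_mem_nhdsGT pi_div_two_pos] with x hx using Ham_le_selfEnergy hα hx

theorem tendsto_Ham_axis_pi_div_two (hα : 0 ≤ α) (hd : 0 < d) (hβ : 0 < β) :
    Tendsto (fun x => Ham α d β x 0) (𝓝[<] (π / 2)) atBot := by
  refine tendsto_atBot_mono' _ ?_ (tendsto_selfEnergy_pi_div_two hd hβ)
  filter_upwards [Ioo_mem_nhdsLT pi_div_two_pos] with x hx using Ham_le_selfEnergy hα hx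

theorem tendsto_Ham_axis_thetaB (hα : 0 < α) (hd : 0 < d) (hβ : 0 < β) :
    Tendsto (fun x => Ham α d β x 0) (𝓝[≠] (thetaB β)) atBot := by
  have hmem : ∀ᶠ x in 𝓝[≠] (thetaB β), x ∈ Ioo 0 (π / 2) \ {thetaB β} :=
    ((isOpen_Ioo.eventually_mem (thetaB_mem_Ioo hβ)).filter_mono nhdsWithin_le_nhds).and
      eventually_mem_nhdsWithin
  have hself : Tendsto (selfEnergy d β) (𝓝[≠] (thetaB β)) (𝓝 (selfEnergy d β (thetaB β))) :=
    (hasDerivAt_selfEnergy (thetaB_mem_Ioo hβ)).continuousAt.tendsto.mono_left nhdsWithin_le_nhds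
  have hD : Tendsto (fun x => √(Dfun d β x 0)) (𝓝[≠] (thetaB β)) (𝓝[>] 0) := by
    refine tendsto_nhdsWithin_iff.2 ⟨?_, hmem.mono fun x hx =>
      sqrt_pos.2 (Dfun_pos hd hβ (mem_OmegaB_of_mem_diff hx 0))⟩
    have hzero : √(Dfun d β (thetaB β) 0) = 0 := by
      simp [Dfun, (sqrt_mul_sin_sub_cos_eq_zero_iff hβ (thetaB_mem_Ioo hβ)).2 rfl]
    have hD_tendsto : Tendsto (fun x => Dfun d β x 0) (𝓝[≠] (thetaB β))
        (𝓝 (Dfun d β (thetaB β) 0)) :=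
      tendsto_Dfun (tendsto_id.mono_left nhdsWithin_le_nhds) tendsto_const_nhds
    simpa only [hzero] using hD_tendsto.sqrt
  have hinteraction : Tendsto (fun x => -(α * √β / √(Dfun d β x 0))) (𝓝[≠] (thetaB β)) atBot := by
    simpa only [div_eq_mul_inv, Function.comp_def] using tendsto_neg_atTop_atBot.comp
      ((tendsto_inv_nhdsGT_zero.comp hD).const_mul_atTop (by positivity : 0 < α * √β))
  refine (hself.add_atBot hinteraction).congr' (hmem.mono fun x hx => ?_)
  simp only [Ham_eq hx.1, sub_eq_add_neg]

end Hamiltonian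

section VectorField

/-- The right-hand side `(F₁, F₂)` of the system, as a vector field on the plane. -/
def vectorField (α d β : ℝ) (p : ℝ × ℝ) : ℝ × ℝ := (F1 α d β p.1 p.2, F2 α d β p.1 p.2)

/-- The time-reversing symmetry `(θ, W) ↦ (θ, -W)` of the system. -/
def axisReflection : ℝ × ℝ →L[ℝ] ℝ × ℝ :=
  (ContinuousLinearMap.fst ℝ ℝ ℝ).prod (-ContinuousLinearMap.snd ℝ ℝ ℝ)

@[simp]
theorem axisReflection_apply (p : ℝ × ℝ) : axisReflection p = (p.1, -p.2) := rfl

theorem vectorField_axisReflection (α d β : ℝ) (p : ℝ × ℝ) :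
    vectorField α d β (axisReflection p) = -axisReflection (vectorField α d β p) := by
  simp [vectorField, F1, F2, Dfun_neg, neg_div]

variable {α d β x w : ℝ}

theorem contDiffAt_vectorField (hd : 0 < d) (hβ : 0 < β) {p : ℝ × ℝ} (hp : p ∈ OmegaB β) :
    ContDiffAt ℝ 1 (vectorField α d β) p := by
  have hsin : 0 < sin p.1 := (sin_mem_Ioo (mem_Ioo_of_mem_OmegaB hp)).1
  have hcos : 0 < cos p.1 := (cos_mem_Ioo (mem_Ioo_of_mem_OmegaB hp)).1
  have hD : 0 < Dfun d β p.1 p.2 := Dfun_pos hd hβ hp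
  have hDpow := (contDiff_Dfun d β).contDiffAt.rpow_const_of_ne (p := 3 / 2) hD.ne'
  refine ContDiffAt.prodMk (.div ?_ hDpow ?_) (.sub (.div ?_ ?_ ?_)
    (.div ?_ (contDiffAt_const.mul hDpow) ?_)) <;> first | positivity | fun_prop

theorem F1_zero (α d β x : ℝ) : F1 α d β x 0 = 0 := by
  simp [F1]

theorem F1_eq_zero_iff (hα : 0 < α) (hd : 0 < d) (hβ : 0 < β) (h : (x, w) ∈ OmegaB β) :
    F1 α d β x w = 0 ↔ w = 0 := by
  have hDpow : 0 < Dfun d β x w ^ ((3 : ℝ) / 2) := rpow_pos_of_pos (Dfun_pos hd hβ h) _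
  rw [F1, div_eq_zero_iff, or_iff_left hDpow.ne', mul_eq_zero, or_iff_right (by positivity)]

end VectorField

/-- The points `(θs, 0)` and `(θss, 0)` are the only equilibria of the system and lie on either side
of `(θ_β, 0)`. Since `F₁` vanishes on the axis `W = 0`, and in the phase space only there, the
conditions involve `F₂` alone. -/
structure IsEquilibriumPair (α d β θs θss : ℝ) : Prop where
  left_mem : θs ∈ Ioo 0 (thetaB β)
  right_mem : θss ∈ Ioo (thetaB β) (π / 2)
  F2_left : F2 α d β θs 0 = 0
  F2_right : F2 α d β θss 0 = 0
  eq_or_eq : ∀ x, (x, 0) ∈ OmegaB β → F2 α d β x 0 = 0 → x = θs ∨ x = θss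

namespace IsEquilibriumPair

variable {α d β θs θss x y w E : ℝ} (h : IsEquilibriumPair α d β θs θss)
include h

theorem left_mem_Ioo : θs ∈ Ioo 0 (π / 2) :=
  ⟨h.left_mem.1, h.left_mem.2.trans (h.right_mem.1.trans h.right_mem.2)⟩

theorem right_mem_Ioo : θss ∈ Ioo 0 (π / 2) :=
  ⟨h.left_mem.1.trans (h.left_mem.2.trans h.right_mem.1), h.right_mem.2⟩

theorem left_mem_OmegaB : (θs, 0) ∈ OmegaB β :=
  mem_OmegaB_of_mem_diff ⟨h.left_mem_Ioo, h.left_mem.2.ne⟩ 0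

theorem right_mem_OmegaB : (θss, 0) ∈ OmegaB β :=
  mem_OmegaB_of_mem_diff ⟨h.right_mem_Ioo, h.right_mem.1.ne'⟩ 0

theorem mem_Ioo_of_mem_Icc (hx : x ∈ Icc θs θss) : x ∈ Ioo 0 (π / 2) :=
  ⟨h.left_mem.1.trans_le hx.1, hx.2.trans_lt h.right_mem.2⟩

theorem deriv_Ham_axis_ne_zero (hd : 0 < d) (hβ : 0 < β) (hx : x ∈ Ioo 0 (π / 2) \ {thetaB β})
    (hs : x ≠ θs) (hss : x ≠ θss) : deriv (fun y => Ham α d β y 0) x ≠ 0 := by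
  have hΩ : (x, 0) ∈ OmegaB β := mem_OmegaB_of_mem_diff hx 0
  rw [(hasDerivAt_Ham_axis hd hβ hΩ).deriv]
  exact neg_ne_zero.2 fun h0 => (h.eq_or_eq x hΩ h0).elim hs hss

theorem strictMonoOn_Ham_axis_Ioc_left (hα : 0 < α) (hd : 0 < d) (hβ : 0 < β) :
    StrictMonoOn (fun x => Ham α d β x 0) (Ioc 0 θs) := by
  have hmem {x : ℝ} (hx₀ : 0 < x) (hx : x ≤ θs) :=
    mem_diff_of_lt_thetaB hx₀ (hx.trans_lt h.left_mem.2)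
  exact strictMonoOn_Ioc_of_deriv_ne_zero_of_tendsto_atBot
    ((continuousOn_Ham_axis α hd hβ).mono fun x hx => hmem hx.1 hx.2)
    (fun x hx => h.deriv_Ham_axis_ne_zero hd hβ (hmem hx.1 hx.2.le) hx.2.ne
      (hx.2.trans (h.left_mem.2.trans h.right_mem.1)).ne)
    (tendsto_Ham_axis_zero hα.le hd)

theorem strictAntiOn_Ham_axis_Ico_left (hα : 0 < α) (hd : 0 < d) (hβ : 0 < β) :
    StrictAntiOn (fun x => Ham α d β x 0) (Ico θs (thetaB β)) := by
  have hmem {x : ℝ} (hx : θs ≤ x) (hx' : x < thetaB β) :=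
    mem_diff_of_lt_thetaB (h.left_mem.1.trans_le hx) hx'
  exact strictAntiOn_Ico_of_deriv_ne_zero_of_tendsto_atBot
    ((continuousOn_Ham_axis α hd hβ).mono fun x hx => hmem hx.1 hx.2)
    (fun x hx => h.deriv_Ham_axis_ne_zero hd hβ (hmem hx.1.le hx.2) hx.1.ne'
      (hx.2.trans h.right_mem.1).ne)
    ((tendsto_Ham_axis_thetaB hα hd hβ).mono_left (nhdsLT_le_nhdsNE _))

theorem strictMonoOn_Ham_axis_Ioc_right (hα : 0 < α) (hd : 0 < d) (hβ : 0 < β) :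
    StrictMonoOn (fun x => Ham α d β x 0) (Ioc (thetaB β) θss) := by
  have hmem {x : ℝ} (hx : thetaB β < x) (hx' : x ≤ θss) :=
    mem_diff_of_thetaB_lt hβ hx (hx'.trans_lt h.right_mem.2)
  exact strictMonoOn_Ioc_of_deriv_ne_zero_of_tendsto_atBot
    ((continuousOn_Ham_axis α hd hβ).mono fun x hx => hmem hx.1 hx.2)
    (fun x hx => h.deriv_Ham_axis_ne_zero hd hβ (hmem hx.1 hx.2.le)
      (h.left_mem.2.trans hx.1).ne' hx.2.ne)
    ((tendsto_Ham_axis_thetaB hα hd hβ).mono_left (nhdsGT_le_nhdsNE _))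

theorem strictAntiOn_Ham_axis_Ico_right (hα : 0 < α) (hd : 0 < d) (hβ : 0 < β) :
    StrictAntiOn (fun x => Ham α d β x 0) (Ico θss (π / 2)) := by
  have hmem {x : ℝ} (hx : θss ≤ x) (hx' : x < π / 2) :=
    mem_diff_of_thetaB_lt hβ (h.right_mem.1.trans_le hx) hx'
  exact strictAntiOn_Ico_of_deriv_ne_zero_of_tendsto_atBot
    ((continuousOn_Ham_axis α hd hβ).mono fun x hx => hmem hx.1 hx.2)
    (fun x hx => h.deriv_Ham_axis_ne_zero hd hβ (hmem hx.1.le hx.2)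
      (h.left_mem.2.trans (h.right_mem.1.trans hx.1)).ne' hx.1.ne')
    (tendsto_Ham_axis_pi_div_two hα.le hd hβ)

theorem Ham_axis_lt_left (hα : 0 < α) (hd : 0 < d) (hβ : 0 < β) (hx : x ∈ Ioo 0 (thetaB β))
    (hne : x ≠ θs) : Ham α d β x 0 < Ham α d β θs 0 := by
  rcases lt_or_gt_of_ne hne with hlt | hgt
  · exact h.strictMonoOn_Ham_axis_Ioc_left hα hd hβ ⟨hx.1, hlt.le⟩ ⟨h.left_mem.1, le_rfl⟩ hlt
  · exact h.strictAntiOn_Ham_axis_Ico_left hα hd hβ ⟨le_rfl, h.left_mem.2⟩ ⟨hgt.le, hx.2⟩ hgt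

theorem Ham_axis_lt_right (hα : 0 < α) (hd : 0 < d) (hβ : 0 < β)
    (hx : x ∈ Ioo (thetaB β) (π / 2)) (hne : x ≠ θss) : Ham α d β x 0 < Ham α d β θss 0 := by
  rcases lt_or_gt_of_ne hne with hlt | hgt
  · exact h.strictMonoOn_Ham_axis_Ioc_right hα hd hβ ⟨hx.1, hlt.le⟩ ⟨h.right_mem.1, le_rfl⟩ hlt
  · exact h.strictAntiOn_Ham_axis_Ico_right hα hd hβ ⟨le_rfl, h.right_mem.2⟩ ⟨hgt.le, hx.2⟩ hgt

theorem le_of_Ham_le (hα : 0 < α) (hd : 0 < d) (hβ : 0 < β) (hx : θs ≤ x)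
    (hy : y ∈ Ico θs (thetaB β)) (hHam : Ham α d β x w ≤ Ham α d β y 0) : y ≤ x := by
  by_contra! hxy
  have hxB : x ∈ Ico θs (thetaB β) := ⟨hx, hxy.trans hy.2⟩
  have hΩ := mem_diff_of_lt_thetaB (h.left_mem.1.trans_le hx) hxB.2
  exact (h.strictAntiOn_Ham_axis_Ico_left hα hd hβ hxB hy hxy).not_ge
    ((Ham_zero_le hα.le hd hβ (mem_OmegaB_of_mem_diff hΩ 0)).trans hHam)

theorem ge_of_Ham_le (hα : 0 < α) (hd : 0 < d) (hβ : 0 < β) (hx : x ≤ θss)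
    (hy : y ∈ Ioc (thetaB β) θss) (hHam : Ham α d β x w ≤ Ham α d β y 0) : x ≤ y := by
  by_contra! hyx
  have hxB : x ∈ Ioc (thetaB β) θss := ⟨hy.1.trans hyx, hx⟩
  have hΩ := mem_diff_of_thetaB_lt hβ hxB.1 (hx.trans_lt h.right_mem.2)
  exact (h.strictMonoOn_Ham_axis_Ioc_right hα hd hβ hy hxB hyx).not_ge
    ((Ham_zero_le hα.le hd hβ (mem_OmegaB_of_mem_diff hΩ 0)).trans hHam)

theorem lt_selfEnergy (hα : 0 ≤ α) (hd : 0 < d) (hβ : 0 ≤ β) (hx : x ∈ Icc θs θss)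
    (hE : E < min (Ham α d β θs 0) (Ham α d β θss 0)) : E < selfEnergy d β x :=
  calc E < min (Ham α d β θs 0) (Ham α d β θss 0) := hE
    _ ≤ min (selfEnergy d β θs) (selfEnergy d β θss) :=
      min_le_min (Ham_le_selfEnergy hα h.left_mem_Ioo) (Ham_le_selfEnergy hα h.right_mem_Ioo)
    _ ≤ selfEnergy d β x :=
      (concaveOn_selfEnergy hd hβ).min_le_of_mem_Icc h.left_mem_Ioo h.right_mem_Ioo hx

end IsEquilibriumPair

/-- The points of the strip between the two equilibria whose energy is below that of both; it is
invariant under the flow, and the solutions starting in it are the leapfrogging ones. -/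
def leapfrogRegion (α d β θs θss : ℝ) : Set (ℝ × ℝ) :=
  {p | p.1 ∈ Ioo θs θss ∧ Ham α d β p.1 p.2 < min (Ham α d β θs 0) (Ham α d β θss 0)}

namespace IsSolution

variable {α d β θs θss x : ℝ} {θ W : ℝ → ℝ} (h : IsSolution α d β θ W)
include h

theorem mem_Ioo (t : ℝ) : θ t ∈ Ioo 0 (π / 2) :=
  mem_Ioo_of_mem_OmegaB (h.1 t)

theorem continuous_theta : Continuous θ :=
  continuous_iff_continuousAt.2 fun t => (h.2.1 t).continuousAt

theorem continuous_W : Continuous W :=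
  continuous_iff_continuousAt.2 fun t => (h.2.2 t).continuousAt

theorem theta_ne_thetaB {t : ℝ} (ht : W t = 0) : θ t ≠ thetaB β := fun hθ =>
  (h.1 t).2.2 (Prod.ext hθ ht)

theorem isIntegralCurve :
    IsIntegralCurve (fun t => (θ t, W t)) fun _ => vectorField α d β := fun t =>
  (h.2.1 t).prodMk (h.2.2 t)

theorem Ham_eq_Ham (hd : 0 < d) (hβ : 0 < β) (s t : ℝ) :
    Ham α d β (θ s) (W s) = Ham α d β (θ t) (W t) := by
  have hderiv (u : ℝ) : HasDerivAt (fun u => Ham α d β (θ u) (W u)) 0 u :=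
    (hasDerivAt_Ham hd hβ (h.1 u) (h.2.1 u) (h.2.2 u)).congr_deriv (by ring)
  exact is_const_of_deriv_eq_zero (fun u => (hderiv u).differentiableAt)
    (fun u => (hderiv u).deriv) s t

theorem reflect (hd : 0 < d) (hβ : 0 < β) {τ : ℝ} (hτ : W τ = 0) (t : ℝ) :
    (θ (2 * τ - t), W (2 * τ - t)) = (θ t, -W t) :=
  isIntegralCurve_reflect (vectorField_axisReflection α d β)
    (fun t => contDiffAt_vectorField hd hβ (h.1 t)) h.isIntegralCurve (by simp [hτ]) t

theorem periodic (hd : 0 < d) (hβ : 0 < β) {σ τ : ℝ} (hσ : W σ = 0) (hτ : W τ = 0) :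
    Function.Periodic (fun t => (θ t, W t)) (2 * (τ - σ)) :=
  isIntegralCurve_periodic_of_reflect (vectorField_axisReflection α d β) (by simp)
    (fun t => contDiffAt_vectorField hd hβ (h.1 t)) h.isIntegralCurve (by simp [hσ]) (by simp [hτ])

theorem theta_eq_of_F2_eq_zero (hd : 0 < d) (hβ : 0 < β) {s : ℝ} (hs : W s = 0)
    (hF2 : F2 α d β (θ s) 0 = 0) (t : ℝ) : θ t = θ s := by
  have hconst := isIntegralCurve_eq_const_of_eq_zero (t₀ := s)
    (fun t => contDiffAt_vectorField hd hβ (h.1 t)) h.isIntegralCurve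
    (by simp [vectorField, hs, hF2, F1_zero])
  exact (Prod.mk.inj (congrFun hconst t)).1

theorem theta_ne_of_Ham_lt (hα : 0 ≤ α) (hd : 0 < d) (hβ : 0 < β) (hx : (x, 0) ∈ OmegaB β) {s : ℝ}
    (hE : Ham α d β (θ s) (W s) < Ham α d β x 0) (t : ℝ) : θ t ≠ x := by
  rintro rfl
  rw [h.Ham_eq_Ham hd hβ s t] at hE
  exact hE.not_ge (Ham_zero_le hα hd hβ hx)

theorem lt_theta_of_Ham_lt (hα : 0 ≤ α) (hd : 0 < d) (hβ : 0 < β) (hx : (x, 0) ∈ OmegaB β) {s : ℝ}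
    (hE : Ham α d β (θ s) (W s) < Ham α d β x 0) (hs : x < θ s) (t : ℝ) : x < θ t := by
  by_contra! ht
  obtain ⟨u, hu⟩ := mem_range_of_exists_le_of_exists_ge h.continuous_theta ⟨t, ht⟩ ⟨s, hs.le⟩
  exact h.theta_ne_of_Ham_lt hα hd hβ hx hE u hu

theorem theta_lt_of_Ham_lt (hα : 0 ≤ α) (hd : 0 < d) (hβ : 0 < β) (hx : (x, 0) ∈ OmegaB β) {s : ℝ}
    (hE : Ham α d β (θ s) (W s) < Ham α d β x 0) (hs : θ s < x) (t : ℝ) : θ t < x := by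
  by_contra! ht
  obtain ⟨u, hu⟩ := mem_range_of_exists_le_of_exists_ge h.continuous_theta ⟨s, hs.le⟩ ⟨t, ht⟩
  exact h.theta_ne_of_Ham_lt hα hd hβ hx hE u hu

theorem mem_leapfrogRegion (hα : 0 ≤ α) (hd : 0 < d) (hβ : 0 < β)
    (hpair : IsEquilibriumPair α d β θs θss) {s : ℝ}
    (hs : (θ s, W s) ∈ leapfrogRegion α d β θs θss) (t : ℝ) :
    (θ t, W t) ∈ leapfrogRegion α d β θs θss := by
  obtain ⟨⟨hleft, hright⟩, hE⟩ := hs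
  obtain ⟨hE_left, hE_right⟩ := lt_min_iff.1 hE
  exact ⟨⟨h.lt_theta_of_Ham_lt hα hd hβ hpair.left_mem_OmegaB hE_left hleft t,
    h.theta_lt_of_Ham_lt hα hd hβ hpair.right_mem_OmegaB hE_right hright t⟩,
    h.Ham_eq_Ham hd hβ t s ▸ hE⟩

theorem exists_tendsto_theta (hα : 0 < α) (hd : 0 < d) (hβ : 0 < β) {a b t₀ : ℝ}
    (hab : ∀ t, θ t ∈ Icc a b) (hW : ∀ t > t₀, W t ≠ 0) : ∃ L ∈ Icc a b, Tendsto θ atTop (𝓝 L) := by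
  obtain ⟨L, hL⟩ := exists_tendsto_atTop_of_deriv_ne_zero h.continuous_theta hab fun t ht => by
    rw [(h.2.1 t).deriv]
    exact (F1_eq_zero_iff hα hd hβ (h.1 t)).not.2 (hW t ht)
  exact ⟨L, isClosed_Icc.mem_of_tendsto hL (Eventually.of_forall hab), hL⟩

theorem exists_tendsto_W (hα : 0 < α) (hd : 0 < d) (hβ : 0 < β) {L t₀ : ℝ}
    (hL : Tendsto θ atTop (𝓝 L)) (hL_mem : L ∈ Ioo 0 (π / 2))
    (hE : Ham α d β (θ 0) (W 0) < selfEnergy d β L) (hW : ∀ t > t₀, W t ≠ 0) :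
    ∃ w, Tendsto W atTop (𝓝 w) := by
  set E := Ham α d β (θ 0) (W 0)
  have hself : Tendsto (fun t => selfEnergy d β (θ t)) atTop (𝓝 (selfEnergy d β L)) :=
    (hasDerivAt_selfEnergy hL_mem).continuousAt.tendsto.comp hL
  have hD : Tendsto (fun t => Dfun d β (θ t) 0) atTop (𝓝 (Dfun d β L 0)) :=
    tendsto_Dfun hL tendsto_const_nhds
  have hWsq : ∀ᶠ t in atTop, (α * √β / (selfEnergy d β (θ t) - E)) ^ 2 - Dfun d β (θ t) 0 =
      W t ^ 2 := by
    filter_upwards [hself.eventually_const_lt hE] with t ht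
    have hlevel := (Ham_eq_iff_Dfun_eq hα hβ (h.mem_Ioo t) ht).1 (h.Ham_eq_Ham hd hβ t 0)
    rw [← hlevel, Dfun_eq_add_sq, add_sub_cancel_left]
  exact exists_tendsto_atTop_of_tendsto_sq h.continuous_W.continuousOn hW
    ((((tendsto_const_nhds.div (hself.sub_const E) (sub_pos.2 hE).ne').pow 2).sub hD).congr' hWsq)

theorem F2_eq_zero_of_tendsto (hα : 0 < α) (hd : 0 < d) (hβ : 0 < β) {L w : ℝ}
    (hL : Tendsto θ atTop (𝓝 L)) (hw : Tendsto W atTop (𝓝 w)) (hLw : (L, w) ∈ OmegaB β) :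
    w = 0 ∧ F2 α d β L 0 = 0 := by
  have hzero := eq_zero_of_isIntegralCurve_of_tendsto h.isIntegralCurve
    (contDiffAt_vectorField hd hβ hLw).continuousAt (hL.prodMk_nhds hw)
  obtain ⟨hF1, hF2⟩ := Prod.mk.inj hzero
  obtain rfl : w = 0 := (F1_eq_zero_iff hα hd hβ hLw).1 hF1
  exact ⟨rfl, hF2⟩

theorem exists_gt_W_eq_zero (hα : 0 < α) (hd : 0 < d) (hβ : 0 < β)
    (hpair : IsEquilibriumPair α d β θs θss) (h0 : (θ 0, W 0) ∈ leapfrogRegion α d β θs θss)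
    (t₀ : ℝ) : ∃ t > t₀, W t = 0 := by
  by_contra! hW
  obtain ⟨L, hL_mem, hL⟩ := h.exists_tendsto_theta hα hd hβ
    (fun t => Ioo_subset_Icc_self (h.mem_leapfrogRegion hα.le hd hβ hpair h0 t).1) hW
  have hL_mem' : L ∈ Ioo 0 (π / 2) := hpair.mem_Ioo_of_mem_Icc hL_mem
  have hE : Ham α d β (θ 0) (W 0) < selfEnergy d β L :=
    hpair.lt_selfEnergy hα.le hd hβ.le hL_mem h0.2
  obtain ⟨w, hw⟩ := h.exists_tendsto_W hα hd hβ hL hL_mem' hE hW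
  have hHam : Ham α d β L w = Ham α d β (θ 0) (W 0) :=
    Ham_eq_of_tendsto hα hβ hL hw hL_mem' hE fun t => h.Ham_eq_Ham hd hβ t 0
  have hΩ : (L, w) ∈ OmegaB β := mem_OmegaB_of_Ham_eq hα hd hβ hL_mem' hE hHam
  obtain ⟨rfl, hF2⟩ := h.F2_eq_zero_of_tendsto hα hd hβ hL hw hΩ
  obtain ⟨hE_left, hE_right⟩ := lt_min_iff.1 h0.2
  rcases hpair.eq_or_eq L hΩ hF2 with hL_eq | hL_eq
  · exact hE_left.ne' (hL_eq ▸ hHam)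
  · exact hE_right.ne' (hL_eq ▸ hHam)

theorem theta_ne_of_W_ne_zero (hα : 0 < α) (hd : 0 < d) (hβ : 0 < β) {s t : ℝ} (hst : s < t)
    (hW : ∀ u ∈ Ioo s t, W u ≠ 0) : θ s ≠ θ t := fun hθ => by
  obtain ⟨u, hu, hF1⟩ := exists_hasDerivAt_eq_zero hst h.continuous_theta.continuousOn hθ
    fun u _ => h.2.1 u
  exact hW u hu ((F1_eq_zero_iff hα hd hβ (h.1 u)).1 hF1)

theorem exists_theta_ne (hα : 0 < α) (hd : 0 < d) (hβ : 0 < β)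
    (hpair : IsEquilibriumPair α d β θs θss) (h0 : (θ 0, W 0) ∈ leapfrogRegion α d β θs θss) :
    ∃ s t, W s = 0 ∧ W t = 0 ∧ θ s ≠ θ t := by
  obtain ⟨s, -, hs⟩ := h.exists_gt_W_eq_zero hα hd hβ hpair h0 0
  obtain ⟨b, hsb, hb⟩ := h.exists_gt_W_eq_zero hα hd hβ hpair h0 s
  have hs_mem : θ s ∈ Ioo θs θss := (h.mem_leapfrogRegion hα.le hd hβ hpair h0 s).1
  have hF2 : F2 α d β (θ s) (W s) ≠ 0 := fun hzero =>
    (hpair.eq_or_eq (θ s) (hs ▸ h.1 s) (hs ▸ hzero)).elim hs_mem.1.ne' hs_mem.2.ne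
  have hne : ∀ᶠ t in 𝓝[>] s, W t ≠ 0 :=
    ((h.2.2 s).eventually_ne hF2).filter_mono (nhdsGT_le_nhdsNE s)
  obtain ⟨t, hst, ht, hW⟩ := exists_next_zero h.continuous_W hne hsb hb
  exact ⟨s, t, hs, ht, h.theta_ne_of_W_ne_zero hα hd hβ hst hW⟩

theorem exists_crossings (hα : 0 < α) (hd : 0 < d) (hβ : 0 < β)
    (hpair : IsEquilibriumPair α d β θs θss) (h0 : (θ 0, W 0) ∈ leapfrogRegion α d β θs θss) :
    ∃ s t, W s = 0 ∧ W t = 0 ∧ θ s < thetaB β ∧ thetaB β < θ t := by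
  obtain ⟨s, t, hs, ht, hne⟩ := h.exists_theta_ne hα hd hβ hpair h0
  have hmem (u : ℝ) : θ u ∈ Ioo θs θss := (h.mem_leapfrogRegion hα.le hd hβ hpair h0 u).1
  have hHam : Ham α d β (θ s) 0 = Ham α d β (θ t) 0 := by
    simpa only [hs, ht] using h.Ham_eq_Ham hd hβ s t
  rcases (h.theta_ne_thetaB hs).lt_or_gt with hs_lt | hs_gt <;>
    rcases (h.theta_ne_thetaB ht).lt_or_gt with ht_lt | ht_gt
  · exact absurd ((hpair.strictAntiOn_Ham_axis_Ico_left hα hd hβ).injOn ⟨(hmem s).1.le, hs_lt⟩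
      ⟨(hmem t).1.le, ht_lt⟩ hHam) hne
  · exact ⟨s, t, hs, ht, hs_lt, ht_gt⟩
  · exact ⟨t, s, ht, hs, ht_lt, hs_gt⟩
  · exact absurd ((hpair.strictMonoOn_Ham_axis_Ioc_right hα hd hβ).injOn ⟨hs_gt, (hmem s).2.le⟩
      ⟨ht_gt, (hmem t).2.le⟩ hHam) hne

theorem isLeapfrog_of_crossings (hd : 0 < d) (hβ : 0 < β) {s t : ℝ} (hs : W s = 0) (ht : W t = 0)
    (hs_lt : θ s < thetaB β) (ht_gt : thetaB β < θ t) : IsLeapfrog β θ W := by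
  have hθ : θ s < θ t := hs_lt.trans ht_gt
  have hst : s ≠ t := fun hst => hθ.ne (congrArg θ hst)
  have hperiodic : ∃ T > 0, Function.Periodic (fun u => (θ u, W u)) T := by
    rcases hst.lt_or_gt with hlt | hgt
    · exact ⟨2 * (t - s), by linarith, h.periodic hd hβ hs ht⟩
    · exact ⟨2 * (s - t), by linarith, h.periodic hd hβ ht hs⟩
  obtain ⟨T, hT, hper⟩ := hperiodic
  exact ⟨⟨T, hT, fun u => Prod.mk.inj (hper u)⟩, ⟨s, t, fun hst' => hθ.ne (Prod.mk.inj hst').1⟩,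
    ⟨s, ⟨(h.mem_Ioo s).1, hs_lt⟩, hs⟩, ⟨t, ⟨ht_gt, (h.mem_Ioo t).2⟩, ht⟩⟩

theorem mem_leapfrogRegion_of_isLeapfrog (hα : 0 < α) (hd : 0 < d) (hβ : 0 < β)
    (hpair : IsEquilibriumPair α d β θs θss) (hleap : IsLeapfrog β θ W) (u : ℝ) :
    (θ u, W u) ∈ leapfrogRegion α d β θs θss := by
  obtain ⟨-, -, ⟨s, hs_mem, hs⟩, ⟨t, ht_mem, ht⟩⟩ := hleap
  have hst : θ s ≠ θ t := (hs_mem.2.trans ht_mem.1).ne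
  have hs_ne : θ s ≠ θs := fun hθ =>
    hst (h.theta_eq_of_F2_eq_zero hd hβ hs (hθ ▸ hpair.F2_left) t).symm
  have ht_ne : θ t ≠ θss := fun hθ =>
    hst (h.theta_eq_of_F2_eq_zero hd hβ ht (hθ ▸ hpair.F2_right) s)
  have hE_left : Ham α d β (θ s) (W s) < Ham α d β θs 0 := hs ▸
    hpair.Ham_axis_lt_left hα hd hβ hs_mem hs_ne
  have hE_right : Ham α d β (θ t) (W t) < Ham α d β θss 0 := ht ▸
    hpair.Ham_axis_lt_right hα hd hβ ht_mem ht_ne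
  rw [h.Ham_eq_Ham hd hβ s t] at hE_left
  exact ⟨⟨h.lt_theta_of_Ham_lt hα.le hd hβ hpair.left_mem_OmegaB hE_left
      (hpair.left_mem.2.trans ht_mem.1) u,
    h.theta_lt_of_Ham_lt hα.le hd hβ hpair.right_mem_OmegaB
      (h.Ham_eq_Ham hd hβ t s ▸ hE_right) (hs_mem.2.trans hpair.right_mem.1) u⟩,
    h.Ham_eq_Ham hd hβ u t ▸ lt_min hE_left hE_right⟩

theorem isLeapfrog_iff (hα : 0 < α) (hd : 0 < d) (hβ : 0 < β)
    (hpair : IsEquilibriumPair α d β θs θss) :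
    IsLeapfrog β θ W ↔ (θ 0, W 0) ∈ leapfrogRegion α d β θs θss := by
  refine ⟨fun hleap => h.mem_leapfrogRegion_of_isLeapfrog hα hd hβ hpair hleap 0, fun h0 => ?_⟩
  obtain ⟨s, t, hs, ht, hs_lt, ht_gt⟩ := h.exists_crossings hα hd hβ hpair h0
  exact h.isLeapfrog_of_crossings hd hβ hs ht hs_lt ht_gt

theorem mem_range_of_theta_eq (hα : 0 < α) (hd : 0 < d) (hβ : 0 < β) {s t w : ℝ} (hs : W s = 0)
    (hE : Ham α d β (θ t) (W t) < selfEnergy d β (θ t))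
    (hw : Ham α d β (θ t) w = Ham α d β (θ t) (W t)) :
    (θ t, w) ∈ range fun u => (θ u, W u) := by
  have hD : Dfun d β (θ t) w = Dfun d β (θ t) (W t) :=
    ((Ham_eq_iff_Dfun_eq hα hβ (h.mem_Ioo t) hE).1 hw).trans
      ((Ham_eq_iff_Dfun_eq hα hβ (h.mem_Ioo t) hE).1 rfl).symm
  rw [Dfun_eq_add_sq d β _ w, Dfun_eq_add_sq d β _ (W t), add_right_inj] at hD
  rcases sq_eq_sq_iff_eq_or_eq_neg.1 hD with rfl | rfl
  · exact ⟨t, rfl⟩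
  · exact ⟨2 * s - t, h.reflect hd hβ hs t⟩

theorem range_eq_of_isLeapfrog (hα : 0 < α) (hd : 0 < d) (hβ : 0 < β)
    (hpair : IsEquilibriumPair α d β θs θss) (hleap : IsLeapfrog β θ W) :
    range (fun t => (θ t, W t)) =
      {p ∈ OmegaB β | Ham α d β p.1 p.2 = Ham α d β (θ 0) (W 0)} ∩ Icc θs θss ×ˢ univ := by
  have hmem := h.mem_leapfrogRegion_of_isLeapfrog hα hd hβ hpair hleap
  refine Subset.antisymm (range_subset_iff.2 fun t => ⟨⟨h.1 t, h.Ham_eq_Ham hd hβ t 0⟩,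
    Ioo_subset_Icc_self (hmem t).1, mem_univ _⟩) ?_
  rintro ⟨x, w⟩ ⟨⟨-, hHam⟩, hx, -⟩
  obtain ⟨-, -, ⟨s, hs_mem, hs⟩, ⟨t, ht_mem, ht⟩⟩ := hleap
  have hHam_eq {u : ℝ} (hu : W u = 0) : Ham α d β x w = Ham α d β (θ u) 0 := by
    rw [← hu]
    exact hHam.trans (h.Ham_eq_Ham hd hβ 0 u)
  have hsx : θ s ≤ x :=
    hpair.le_of_Ham_le hα hd hβ hx.1 ⟨(hmem s).1.1.le, hs_mem.2⟩ (hHam_eq hs).le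
  have hxt : x ≤ θ t :=
    hpair.ge_of_Ham_le hα hd hβ hx.2 ⟨ht_mem.1, (hmem t).1.2.le⟩ (hHam_eq ht).le
  obtain ⟨u, rfl⟩ := mem_range_of_exists_le_of_exists_ge h.continuous_theta ⟨s, hsx⟩ ⟨t, hxt⟩
  exact h.mem_range_of_theta_eq hα hd hβ hs
    (hpair.lt_selfEnergy hα.le hd hβ.le hx (hmem u).2) (hHam.trans (h.Ham_eq_Ham hd hβ 0 u))

end IsSolution

theorem leapfrog_characterization_initial_W_zero_general {α d β θs θss : ℝ} {θ W : ℝ → ℝ}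
    (hα : 0 < α) (hd : 0 < d) (hβ : 0 < β) (hpair : IsEquilibriumPair α d β θs θss)
    (hsol : IsSolution α d β θ W) :
    (IsLeapfrog β θ W ↔ θ 0 ∈ Ioo θs θss ∧
      Ham α d β (θ 0) (W 0) < min (Ham α d β θs 0) (Ham α d β θss 0)) ∧
    (IsLeapfrog β θ W → range (fun t => (θ t, W t)) =
      {p ∈ OmegaB β | Ham α d β p.1 p.2 = Ham α d β (θ 0) (W 0)} ∩ Icc θs θss ×ˢ univ) :=
  ⟨hsol.isLeapfrog_iff hα hd hβ hpair, hsol.range_eq_of_isLeapfrog hα hd hβ hpair⟩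

/-- Lemma 3.1: characterization of leapfrogging for initial data of the form
(θ₀, 0), given the two equilibrium points (θ_*, 0) and (θ_**, 0). -/
theorem leapfrog_characterization_initial_W_zero
    (α d β : ℝ) (hα : 0 < α) (hα' : α < 1 / 3) (hd : 0 < d) (hβ : 1 ≤ β)
    (θs θss : ℝ)
    (hθs : 0 < θs ∧ θs < thetaB β)
    (hθss : thetaB β < θss ∧ θss < Real.pi / 2)
    (heqs : F1 α d β θs 0 = 0 ∧ F2 α d β θs 0 = 0)
    (heqss : F1 α d β θss 0 = 0 ∧ F2 α d β θss 0 = 0)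
    (honly : ∀ p ∈ OmegaB β, F1 α d β p.1 p.2 = 0 → F2 α d β p.1 p.2 = 0 →
      p = (θs, 0) ∨ p = (θss, 0))
    (θ₀ : ℝ) (h₀ : (θ₀, (0 : ℝ)) ∈ OmegaB β)
    (θ W : ℝ → ℝ) (hsol : IsSolution α d β θ W)
    (hinit : θ 0 = θ₀ ∧ W 0 = 0) :
    (θ₀ ∈ Set.Ioo θs θss ∧
        Ham α d β θ₀ 0 < min (Ham α d β θs 0) (Ham α d β θss 0) →
      IsLeapfrog β θ W ∧
        Set.range (fun t => (θ t, W t)) =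
          {p ∈ OmegaB β | Ham α d β p.1 p.2 = Ham α d β θ₀ 0} ∩
            Set.Icc θs θss ×ˢ (Set.univ : Set ℝ)) ∧
    (¬ (θ₀ ∈ Set.Ioo θs θss ∧
        Ham α d β θ₀ 0 < min (Ham α d β θs 0) (Ham α d β θss 0)) →
      ¬ IsLeapfrog β θ W) := by
  obtain ⟨rfl, hW⟩ := hinit
  have hpair : IsEquilibriumPair α d β θs θss :=
    ⟨hθs, hθss, heqs.2, heqss.2, fun x hx hF2 =>
      (honly (x, 0) hx (F1_zero α d β x) hF2).imp (congrArg Prod.fst) (congrArg Prod.fst)⟩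
  obtain ⟨hiff, hrange⟩ := leapfrog_characterization_initial_W_zero_general hα hd
    (zero_lt_one.trans_le hβ) hpair hsol
  rw [hW] at hiff hrange
  exact ⟨fun h => ⟨hiff.2 h, hrange (hiff.2 h)⟩, hiff.not.2⟩
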